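/- Fix an odd integer p ≥ 5, let R > 0, and let u : ℝ × (0,∞) → ℝ be C^∞ on {(t,r) : r > R + |t|}, satisfying ∂_t²u − ∂_r²u − (3/r)∂_r u = |u|^{p−1}u there, with data (u(0,·), ∂_t u(0,·)) = (0, u₁) on (R,∞) where u₁ ∈ L²(R). Assume that the quantities ‖u‖_{L²L⁸(R)}, ‖u‖_{L³L⁶(R)}, ‖∂_t u‖_{L³L⁶(R)}, and sup_{t∈ℝ} ‖(u(t,·), ∂_t u(t,·))‖_{H(R+|t|)} are finite, and that the exterior energy of u vanishes. Then u(t, r) = 0 for all t ∈ ℝ and all r > R + |t|. -/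

import Mathlib

open MeasureTheory Filter Set
open scoped ENNReal

/-- The exterior energy norm `‖(v,w)‖_{H(R)} = (∫_R^∞ (|v'|² + |w|²) r³ dr)^{1/2}`. -/
noncomputable def eH (R : ℝ) (v w : ℝ → ℝ) : ℝ≥0∞ :=
  ((∫⁻ r in Ioi R, ENNReal.ofReal ((deriv v r) ^ 2 * r ^ 3)) +
      ∫⁻ r in Ioi R, ENNReal.ofReal ((w r) ^ 2 * r ^ 3)) ^ (1 / 2 : ℝ)

/-- The exterior spacetime norm `‖u‖_{L^aL^b(R)}` over the region `{r > R + |t|}`. -/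
noncomputable def eLL (a b R : ℝ) (u : ℝ → ℝ → ℝ) : ℝ≥0∞ :=
  (∫⁻ t : ℝ,
      (∫⁻ r in Ioi (R + |t|), ENNReal.ofReal (|u t r| ^ b * r ^ 3)) ^ (a / b)) ^ (1 / a)

/-- The time derivative `∂_t u` of a function of `(t,r)`. -/
noncomputable def dtu (u : ℝ → ℝ → ℝ) (t r : ℝ) : ℝ := deriv (fun s => u s r) t

/-- `u` is an exterior solution of `∂_t²u - ∂_r²u - (3/r)∂_r u = |u|^{p-1}u`
on `{r > R + |t|}`, of smoothness class `C^n`. -/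
def IsExtSol (p : ℕ) (n : ℕ∞) (R : ℝ) (u : ℝ → ℝ → ℝ) : Prop :=
  ContDiffOn ℝ n (fun q : ℝ × ℝ => u q.1 q.2) {q : ℝ × ℝ | R + |q.1| < q.2} ∧
  ∀ t r : ℝ, R + |t| < r →
    deriv (fun s => dtu u s r) t - deriv (deriv (u t)) r - (3 / r) * deriv (u t) r
      = |u t r| ^ (p - 1) * u t r

/-- The exterior energy of `u` outside `{r > R + |t|}` vanishes as `t → ±∞`. -/
def ExtEnergyVanishes (R : ℝ) (u : ℝ → ℝ → ℝ) : Prop :=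
  Tendsto (fun t : ℝ => ∫ r in Ioi (R + |t|),
      ((dtu u t r) ^ 2 + (deriv (u t) r) ^ 2) * r ^ 3) atTop (nhds 0) ∧
  Tendsto (fun t : ℝ => ∫ r in Ioi (R + |t|),
      ((dtu u t r) ^ 2 + (deriv (u t) r) ^ 2) * r ^ 3) atBot (nhds 0)

/-- `sup_{t∈ℝ} ‖(u(t,·), ∂_t u(t,·))‖_{H(R+|t|)}`. -/
noncomputable def supH (R : ℝ) (u : ℝ → ℝ → ℝ) : ℝ≥0∞ :=
  ⨆ t : ℝ, eH (R + |t|) (u t) (fun r => dtu u t r)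

/-!
Finite energy makes `u = O(1/r)`, and `r^(3/2) u` solves a one-dimensional wave equation whose
potential is `O(1/r²)`. Its derivative along an ingoing null direction is transported outwards
along a ray to infinity, where the vanishing exterior energy forces it to zero; integrating back
bounds `∂_t u` by `O(1/r²)`, with a constant proportional to that of the bound on `r u`. Since
`u(0, ·) = 0`, integration in time gives `u = o(1/r)` for bounded times, and the small energy
does so for large times, whence `∂_t u = o(1/r²)`.

Now `∂_t u` solves the linearised equation, whose potential is `O(1/r⁴)` because `p ≥ 5`, and it
decays faster than the fundamental solution `1/r²`. Such a function vanishes: at a maximal ratio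
of `r^(3/2) ∂_t u` to the barrier `r^(-1/2) exp(k/r)`, the strict differential inequality of the
barrier, integrated over characteristic squares in the forward cone `r' ≥ r + |t' - t|`, makes
their difference positive at a point of contact. Hence `∂_t u = 0`, and `u(0, ·) = 0` gives `u = 0`.
-/

open scoped Topology

open Function (uncurry)

/-! ### Partial derivatives -/

/-- The radial derivative `∂_r u`, the companion of `dtu`. -/
noncomputable def dru (u : ℝ → ℝ → ℝ) (t r : ℝ) : ℝ := deriv (u t) r

section PartialDerivatives

variable {f g : ℝ → ℝ → ℝ} {t r : ℝ}

lemma dtu_eq_fderiv (hf : DifferentiableAt ℝ (uncurry f) (t, r)) :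
    dtu f t r = fderiv ℝ (uncurry f) (t, r) (1, 0) :=
  (HasFDerivAt.comp_hasDerivAt (f := fun s => (s, r)) t hf.hasFDerivAt
    ((hasDerivAt_id t).prodMk (hasDerivAt_const t r))).deriv

lemma dru_eq_fderiv (hf : DifferentiableAt ℝ (uncurry f) (t, r)) :
    dru f t r = fderiv ℝ (uncurry f) (t, r) (0, 1) :=
  (HasFDerivAt.comp_hasDerivAt (f := fun s => (t, s)) r hf.hasFDerivAt
    ((hasDerivAt_const r t).prodMk (hasDerivAt_id r))).deriv

lemma hasDerivAt_comp_curve {x y : ℝ → ℝ} {x' y' s : ℝ}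
    (hf : DifferentiableAt ℝ (uncurry f) (x s, y s))
    (hx : HasDerivAt x x' s) (hy : HasDerivAt y y' s) :
    HasDerivAt (fun s => f (x s) (y s))
      (x' * dtu f (x s) (y s) + y' * dru f (x s) (y s)) s := by
  have hchain := hf.hasFDerivAt.comp_hasDerivAt s (hx.prodMk hy)
  have hdir : ((x', y') : ℝ × ℝ) = x' • ((1 : ℝ), (0 : ℝ)) + y' • ((0 : ℝ), (1 : ℝ)) := by simp
  rw [hdir, map_add, map_smul, map_smul, ← dtu_eq_fderiv hf, ← dru_eq_fderiv hf] at hchain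
  exact hchain

lemma hasDerivAt_time (hf : DifferentiableAt ℝ (uncurry f) (t, r)) :
    HasDerivAt (fun s => f s r) (dtu f t r) t := by
  simpa using hasDerivAt_comp_curve hf (hasDerivAt_id t) (hasDerivAt_const t r)

lemma hasDerivAt_radius (hf : DifferentiableAt ℝ (uncurry f) (t, r)) :
    HasDerivAt (f t) (dru f t r) r := by
  simpa using hasDerivAt_comp_curve hf (hasDerivAt_const r t) (hasDerivAt_id r)

variable {m n : WithTop ℕ∞} {q : ℝ × ℝ}

lemma eventually_differentiableAt_of_contDiffAt (hf : ContDiffAt ℝ n (uncurry f) q) (hn : 1 ≤ n) :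
    ∀ᶠ q' in 𝓝 q, DifferentiableAt ℝ (uncurry f) q' :=
  ((hf.of_le hn).eventually (by simp)).mono fun _ h => h.differentiableAt one_ne_zero

lemma dtu_eventuallyEq_fderiv (hf : ContDiffAt ℝ n (uncurry f) q) (hn : 1 ≤ n) :
    uncurry (dtu f) =ᶠ[𝓝 q] fun q => fderiv ℝ (uncurry f) q (1, 0) :=
  (eventually_differentiableAt_of_contDiffAt hf hn).mono fun _ h => dtu_eq_fderiv h

lemma dru_eventuallyEq_fderiv (hf : ContDiffAt ℝ n (uncurry f) q) (hn : 1 ≤ n) :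
    uncurry (dru f) =ᶠ[𝓝 q] fun q => fderiv ℝ (uncurry f) q (0, 1) :=
  (eventually_differentiableAt_of_contDiffAt hf hn).mono fun _ h => dru_eq_fderiv h

lemma contDiffAt_dtu (hf : ContDiffAt ℝ n (uncurry f) q) (hmn : m + 1 ≤ n) :
    ContDiffAt ℝ m (uncurry (dtu f)) q :=
  ((hf.fderiv_right hmn).clm_apply contDiffAt_const).congr_of_eventuallyEq
    (dtu_eventuallyEq_fderiv hf (le_add_self.trans hmn))

lemma contDiffAt_dru (hf : ContDiffAt ℝ n (uncurry f) q) (hmn : m + 1 ≤ n) :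
    ContDiffAt ℝ m (uncurry (dru f)) q :=
  ((hf.fderiv_right hmn).clm_apply contDiffAt_const).congr_of_eventuallyEq
    (dru_eventuallyEq_fderiv hf (le_add_self.trans hmn))

lemma differentiableAt_dtu (hf : ContDiffAt ℝ 2 (uncurry f) q) :
    DifferentiableAt ℝ (uncurry (dtu f)) q :=
  (contDiffAt_dtu hf (m := 1) (by norm_num)).differentiableAt one_ne_zero

lemma differentiableAt_dru (hf : ContDiffAt ℝ 2 (uncurry f) q) :
    DifferentiableAt ℝ (uncurry (dru f)) q :=
  (contDiffAt_dru hf (m := 1) (by norm_num)).differentiableAt one_ne_zero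

lemma dtu_dru_comm (hf : ContDiffAt ℝ 2 (uncurry f) (t, r)) :
    dtu (dru f) t r = dru (dtu f) t r := by
  have hf' : DifferentiableAt ℝ (fderiv ℝ (uncurry f)) (t, r) :=
    (hf.fderiv_right (m := 1) (by norm_num)).differentiableAt one_ne_zero
  have hsymm := hf.isSymmSndFDerivAt (by simp)
  rw [dtu_eq_fderiv (differentiableAt_dru hf), dru_eq_fderiv (differentiableAt_dtu hf),
    (dru_eventuallyEq_fderiv hf one_le_two).fderiv_eq,
    (dtu_eventuallyEq_fderiv hf one_le_two).fderiv_eq,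
    fderiv_clm_apply hf' (by fun_prop), fderiv_clm_apply hf' (by fun_prop)]
  simpa using hsymm (1, 0) (0, 1)

lemma dru_congr (h : uncurry f =ᶠ[𝓝 (t, r)] uncurry g) : dru f t r = dru g t r :=
  (h.comp_tendsto (Continuous.prodMk_right t).continuousAt).deriv_eq

lemma dtu_dru_dru_comm (hf : ContDiffAt ℝ 3 (uncurry f) (t, r)) :
    dtu (dru (dru f)) t r = dru (dru (dtu f)) t r := by
  have hcomm : uncurry (dtu (dru f)) =ᶠ[𝓝 (t, r)] uncurry (dru (dtu f)) :=
    ((hf.of_le (m := 2) (by norm_num)).eventually (by simp)).mono fun _ h => dtu_dru_comm h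
  rw [dtu_dru_comm (contDiffAt_dru hf (by norm_num)), dru_congr hcomm]

end PartialDerivatives

/-! ### The exterior region and the one-dimensional wave operator -/

/-- The exterior region `{(t, r) : r > R + |t|}` of a light cone. -/
def extRegion (R : ℝ) : Set (ℝ × ℝ) := {q : ℝ × ℝ | R + |q.1| < q.2}

/-- The one-dimensional wave operator `∂_t²f - ∂_r²f`. -/
noncomputable def dalembertian (f : ℝ → ℝ → ℝ) (t r : ℝ) : ℝ :=
  dtu (dtu f) t r - dru (dru f) t r

/-- The null derivative `∂_r f - σ ∂_t f`. For `σ = ±1` it is the one that the wave operator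
transports along the ray `s ↦ (t + σ s, r + s)`, and for `s ≥ 0` this ray stays in the exterior
region. -/
noncomputable def nullDeriv (σ : ℝ) (f : ℝ → ℝ → ℝ) (t r : ℝ) : ℝ := dru f t r - σ * dtu f t r

lemma isOpen_extRegion (R : ℝ) : IsOpen (extRegion R) :=
  isOpen_lt (by fun_prop) (by fun_prop)

lemma extRegion_mem_nhds {R t r : ℝ} (h : R + |t| < r) : extRegion R ∈ 𝓝 (t, r) :=
  (isOpen_extRegion R).mem_nhds h

lemma lt_of_add_abs_lt {R t r : ℝ} (h : R + |t| < r) : R < r := by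
  linarith [abs_nonneg t]

lemma pos_of_add_abs_lt {R t r : ℝ} (hR : 0 ≤ R) (h : R + |t| < r) : 0 < r :=
  hR.trans_lt (lt_of_add_abs_lt h)

lemma add_abs_lt_of_mem_cone {R t r t' r' : ℝ} (h : R + |t| < r) (h' : r + |t' - t| ≤ r') :
    R + |t'| < r' := by
  linarith [abs_sub_abs_le_abs_sub t' t]

lemma add_abs_lt_of_mem_ray {R t r σ s : ℝ} (hσ : |σ| = 1) (h : R + |t| < r) (hs : 0 ≤ s) :
    R + |t + σ * s| < r + s :=
  add_abs_lt_of_mem_cone h (by simp [abs_mul, hσ, abs_of_nonneg hs])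

lemma continuousOn_slice {R : ℝ} {f : ℝ → ℝ → ℝ} (hf : ContinuousOn (uncurry f) (extRegion R))
    (t : ℝ) : ContinuousOn (f t) (Ioi (R + |t|)) :=
  hf.comp (f := fun r => (t, r)) (by fun_prop) fun _ hr => hr

lemma hasDerivAt_nullDeriv_ray {σ t r s : ℝ} {f : ℝ → ℝ → ℝ} (hσ : |σ| = 1)
    (hf : ContDiffAt ℝ 2 (uncurry f) (t + σ * s, r + s)) :
    HasDerivAt (fun b => nullDeriv σ f (t + σ * b) (r + b))
      (-dalembertian f (t + σ * s) (r + s)) s := by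
  have ht : HasDerivAt (fun b => t + σ * b) σ s := by
    simpa using ((hasDerivAt_id s).const_mul σ).const_add t
  have hr : HasDerivAt (fun b => r + b) 1 s := (hasDerivAt_id s).const_add r
  have hσ2 : σ ^ 2 = 1 := by rw [← sq_abs, hσ, one_pow]
  refine ((hasDerivAt_comp_curve (differentiableAt_dru hf) ht hr).fun_sub
    ((hasDerivAt_comp_curve (differentiableAt_dtu hf) ht hr).const_mul σ)).congr_deriv ?_
  rw [dtu_dru_comm hf, dalembertian]
  linear_combination -dtu (dtu f) (t + σ * s) (r + s) * hσ2

section ContDiffOnExtRegion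

variable {R : ℝ} {φ : ℝ → ℝ → ℝ}

lemma continuousOn_dtu (hφ : ContDiffOn ℝ 2 (uncurry φ) (extRegion R)) :
    ContinuousOn (uncurry (dtu φ)) (extRegion R) := fun _ hq =>
  (differentiableAt_dtu (hφ.contDiffAt (extRegion_mem_nhds hq))).continuousAt.continuousWithinAt

lemma continuousOn_dru (hφ : ContDiffOn ℝ 2 (uncurry φ) (extRegion R)) :
    ContinuousOn (uncurry (dru φ)) (extRegion R) := fun _ hq =>
  (differentiableAt_dru (hφ.contDiffAt (extRegion_mem_nhds hq))).continuousAt.continuousWithinAt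

lemma continuousOn_nullDeriv (hφ : ContDiffOn ℝ 2 (uncurry φ) (extRegion R)) (σ : ℝ) :
    ContinuousOn (uncurry (nullDeriv σ φ)) (extRegion R) :=
  (continuousOn_dru hφ).sub (continuousOn_const.mul (continuousOn_dtu hφ))

end ContDiffOnExtRegion

/-! ### Non-radiative waves in one dimension -/

section NonRadiative

variable {R σ r₀ : ℝ} {φ : ℝ → ℝ → ℝ} {B B' : ℝ → ℝ}

lemma abs_nullDeriv_ray_sub_le (hσ : |σ| = 1) (hφ : ContDiffOn ℝ 2 (uncurry φ) (extRegion R))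
    (hB : ∀ r, R < r → HasDerivAt B (B' r) r)
    (hbox : ∀ t r, R + |t| < r → r₀ ≤ r → |dalembertian φ t r| ≤ -B' r)
    {t r s : ℝ} (h : R + |t| < r) (hr₀ : r₀ ≤ r) (hs : 0 ≤ s) :
    |nullDeriv σ φ (t + σ * s) (r + s) - nullDeriv σ φ t r| ≤ B r - B (r + s) := by
  have hray : ∀ x ∈ Icc 0 s, HasDerivAt
      (fun b => nullDeriv σ φ (t + σ * b) (r + b) - nullDeriv σ φ t r)
      (-dalembertian φ (t + σ * x) (r + x)) x := fun x hx =>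
    (hasDerivAt_nullDeriv_ray hσ (hφ.contDiffAt
      (extRegion_mem_nhds (add_abs_lt_of_mem_ray hσ h hx.1)))).sub_const _
  have hBray : ∀ x ∈ Icc 0 s, HasDerivAt (fun b => B r - B (r + b)) (-B' (r + x)) x :=
    fun x hx => ((hB (r + x) (by linarith [lt_of_add_abs_lt h, hx.1])).comp_const_add r x).const_sub
      (B r)
  simpa using image_norm_le_of_norm_deriv_right_le_deriv_boundary' (a := 0) (b := s)
    (fun x hx => (hray x hx).continuousAt.continuousWithinAt)
    (fun x hx => (hray x (Ico_subset_Icc_self hx)).hasDerivWithinAt) (by simp)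
    (fun x hx => (hBray x hx).continuousAt.continuousWithinAt)
    (fun x hx => (hBray x (Ico_subset_Icc_self hx)).hasDerivWithinAt)
    (fun x hx => by
      rw [norm_neg, Real.norm_eq_abs]
      exact hbox _ _ (add_abs_lt_of_mem_ray hσ h hx.1) (by linarith [hx.1]))
    (x := s) ⟨hs, le_rfl⟩

lemma exists_window_le_abs_nullDeriv (hσ : |σ| = 1)
    (hφ : ContDiffOn ℝ 2 (uncurry φ) (extRegion R))
    (hB : ∀ r, R < r → HasDerivAt B (B' r) r) (hB_nonneg : ∀ r, R < r → 0 ≤ B r)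
    (hbox : ∀ t r, R + |t| < r → r₀ ≤ r → |dalembertian φ t r| ≤ -B' r)
    {t r : ℝ} (h : R + |t| < r) (hr₀ : r₀ ≤ r) (hlt : B r < |nullDeriv σ φ t r|) :
    ∃ η > 0, ∃ δ > 0, ∀ T, |t| ≤ T → ∀ x ∈ Icc (r - σ * t + T) (r - σ * t + T + δ),
      η ≤ |nullDeriv σ φ (σ * T) x| := by
  have hσt : |σ * t| = |t| := by rw [abs_mul, hσ, one_mul]
  have hσ2 : σ ^ 2 = 1 := by rw [← sq_abs, hσ, one_pow]
  have hcont : ContinuousAt (fun a => |nullDeriv σ φ (t - σ * a) (r + a)| - B (r + a)) 0 := by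
    have hnull : ContinuousAt (uncurry (nullDeriv σ φ)) (t - σ * 0, r + 0) :=
      (continuousOn_nullDeriv hφ σ).continuousAt (extRegion_mem_nhds (by simpa using h))
    have hBr : ContinuousAt B (r + 0) := (hB _ (by simpa using lt_of_add_abs_lt h)).continuousAt
    exact (hnull.comp (f := fun a => (t - σ * a, r + a)) (by fun_prop)).abs.sub
      (hBr.comp (f := fun a => r + a) (by fun_prop))
  obtain ⟨η, hη, hηlt⟩ := exists_between (sub_pos.2 hlt)
  obtain ⟨δ, hδ, hball⟩ := Metric.eventually_nhds_iff.1
    (hcont.eventually_const_lt (u := η) (by simpa using hηlt))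
  refine ⟨η, hη, δ, hδ, fun T hT x hx => ?_⟩
  obtain ⟨a, rfl⟩ : ∃ a, x = r - σ * t + T + 2 * a := ⟨(x - (r - σ * t + T)) / 2, by ring⟩
  have ha : 0 ≤ a := by linarith [hx.1]
  have hstart := hball (y := a) (by rw [Real.dist_eq, sub_zero, abs_of_nonneg ha]; linarith [hx.2])
  have hmem : R + |t - σ * a| < r + a := by
    simpa [sub_eq_add_neg] using add_abs_lt_of_mem_ray (σ := -σ) (by simpa using hσ) h ha
  have hs : 0 ≤ T - σ * t + a := by linarith [le_abs_self (σ * t)]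
  have hray := abs_nullDeriv_ray_sub_le hσ hφ hB hbox hmem (by linarith) hs
  have htime : t - σ * a + σ * (T - σ * t + a) = σ * T := by linear_combination -t * hσ2
  have hrad : r + a + (T - σ * t + a) = r - σ * t + T + 2 * a := by ring
  rw [htime, hrad, abs_sub_comm] at hray
  have hBx : 0 ≤ B (r - σ * t + T + 2 * a) :=
    hB_nonneg _ (by linarith [lt_of_add_abs_lt hmem])
  linarith [abs_sub_abs_le_abs_sub (nullDeriv σ φ (t - σ * a) (r + a))
    (nullDeriv σ φ (σ * T) (r - σ * t + T + 2 * a))]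

/-- `nullDeriv σ φ` varies by at most `B r` along the ray through `(t, r)`, and its value at the
far end of the ray is seen by the energy in windows that move with the wave. -/
lemma abs_nullDeriv_le_of_tendsto_window (hσ : |σ| = 1)
    (hφ : ContDiffOn ℝ 2 (uncurry φ) (extRegion R))
    (hB : ∀ r, R < r → HasDerivAt B (B' r) r) (hB_nonneg : ∀ r, R < r → 0 ≤ B r)
    (hbox : ∀ t r, R + |t| < r → r₀ ≤ r → |dalembertian φ t r| ≤ -B' r)
    (hwindow : ∀ c δ, R < c → 0 < δ → Tendsto
      (fun T => ∫ x in (c + T)..(c + T + δ), nullDeriv σ φ (σ * T) x ^ 2) atTop (𝓝 0))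
    {t r : ℝ} (h : R + |t| < r) (hr₀ : r₀ ≤ r) :
    |nullDeriv σ φ t r| ≤ B r := by
  by_contra! hlt
  obtain ⟨η, hη, δ, hδ, hslice⟩ :=
    exists_window_le_abs_nullDeriv hσ hφ hB hB_nonneg hbox h hr₀ hlt
  have hσt : |σ * t| = |t| := by rw [abs_mul, hσ, one_mul]
  have hc : R < r - σ * t := by linarith [le_abs_self (σ * t)]
  have hlow : ∀ᶠ T in atTop, δ * η ^ 2 ≤
      ∫ x in (r - σ * t + T)..(r - σ * t + T + δ), nullDeriv σ φ (σ * T) x ^ 2 := by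
    filter_upwards [eventually_ge_atTop |t|] with T hT
    have hT0 : 0 ≤ T := (abs_nonneg t).trans hT
    have hle : r - σ * t + T ≤ r - σ * t + T + δ := by linarith
    have hsub : Icc (r - σ * t + T) (r - σ * t + T + δ) ⊆ Ioi (R + |σ * T|) := fun x hx => by
      rw [mem_Ioi, abs_mul, hσ, one_mul, abs_of_nonneg hT0]
      linarith [hx.1]
    have hint : IntervalIntegrable (fun x => nullDeriv σ φ (σ * T) x ^ 2) volume
        (r - σ * t + T) (r - σ * t + T + δ) :=
      (((continuousOn_slice (continuousOn_nullDeriv hφ σ) (σ * T)).mono hsub).pow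
        2).intervalIntegrable_of_Icc hle
    calc δ * η ^ 2 = ∫ _ in (r - σ * t + T)..(r - σ * t + T + δ), η ^ 2 := by simp
      _ ≤ _ := intervalIntegral.integral_mono_on hle (by simp) hint fun x hx => by
        rw [← sq_abs (nullDeriv _ _ _ _)]
        gcongr
        exact hslice T hT x hx
  exact (by positivity : 0 < δ * η ^ 2).not_ge (ge_of_tendsto (hwindow _ δ hc hδ) hlow)

lemma abs_dtu_le_of_tendsto_window (hφ : ContDiffOn ℝ 2 (uncurry φ) (extRegion R))
    (hB : ∀ r, R < r → HasDerivAt B (B' r) r) (hB_nonneg : ∀ r, R < r → 0 ≤ B r)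
    (hbox : ∀ t r, R + |t| < r → r₀ ≤ r → |dalembertian φ t r| ≤ -B' r)
    (hwindow : ∀ σ c δ, |σ| = 1 → R < c → 0 < δ → Tendsto
      (fun T => ∫ x in (c + T)..(c + T + δ), nullDeriv σ φ (σ * T) x ^ 2) atTop (𝓝 0))
    {t r : ℝ} (h : R + |t| < r) (hr₀ : r₀ ≤ r) :
    |dtu φ t r| ≤ B r := by
  have hnull : ∀ σ : ℝ, |σ| = 1 → |nullDeriv σ φ t r| ≤ B r := fun σ hσ =>
    abs_nullDeriv_le_of_tendsto_window hσ hφ hB hB_nonneg hbox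
      (fun c δ => hwindow σ c δ hσ) h hr₀
  have hdtu : dtu φ t r = (nullDeriv (-1) φ t r - nullDeriv 1 φ t r) / 2 := by
    simp only [nullDeriv]
    ring
  have h₁ := abs_le.1 (hnull 1 (by simp))
  have h₂ := abs_le.1 (hnull (-1) (by simp))
  rw [hdtu, abs_le]
  constructor <;> linarith

end NonRadiative

/-! ### Comparison with a radial barrier -/

lemma lt_of_forall_hasDerivAt_pos {f f' : ℝ → ℝ} {a b : ℝ} (hab : a < b)
    (hf : ∀ x ∈ Icc a b, HasDerivAt f (f' x) x) (hf' : ∀ x ∈ Icc a b, 0 < f' x) : f a < f b :=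
  strictMonoOn_of_hasDerivWithinAt_pos (convex_Icc a b) (HasDerivAt.continuousOn hf)
    (fun x hx => (hf x (interior_subset hx)).hasDerivWithinAt)
    (fun x hx => hf' x (interior_subset hx)) (left_mem_Icc.2 hab.le) (right_mem_Icc.2 hab.le) hab

section Parallelogram

variable {R t r : ℝ} {z : ℝ → ℝ → ℝ}

lemma nullDeriv_lt_ray (hz : ContDiffOn ℝ 2 (uncurry z) (extRegion R)) (h : R + |t| < r)
    (hbox : ∀ t' r', r + |t' - t| ≤ r' → dalembertian z t' r' < 0) {b : ℝ} (hb : 0 < b) :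
    nullDeriv 1 z t r < nullDeriv 1 z (t + b) (r + b) := by
  have hcone : ∀ x ∈ Icc 0 b, r + |t + 1 * x - t| ≤ r + x := fun x hx => by
    simp [abs_of_nonneg hx.1]
  simpa using lt_of_forall_hasDerivAt_pos hb
    (fun x hx => hasDerivAt_nullDeriv_ray (t := t) (r := r) abs_one (hz.contDiffAt
      (extRegion_mem_nhds (add_abs_lt_of_mem_cone h (hcone x hx)))))
    (fun x hx => neg_pos.2 (hbox _ _ (hcone x hx)))

lemma hasDerivAt_incoming_ray {a : ℝ} (hz : DifferentiableAt ℝ (uncurry z) (t - a, r + a)) :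
    HasDerivAt (fun a => z (t - a) (r + a)) (nullDeriv 1 z (t - a) (r + a)) a := by
  refine (hasDerivAt_comp_curve hz ((hasDerivAt_id a).const_sub t)
    ((hasDerivAt_id a).const_add r)).congr_deriv ?_
  simp only [nullDeriv]
  ring

/-- The integrated form of `∂_r²z - ∂_t²z > 0` over a characteristic parallelogram. -/
lemma add_lt_add_of_dalembertian_neg (hz : ContDiffOn ℝ 2 (uncurry z) (extRegion R))
    (h : R + |t| < r) (hbox : ∀ t' r', r + |t' - t| ≤ r' → dalembertian z t' r' < 0)
    {a b : ℝ} (ha : 0 < a) (hb : 0 < b) :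
    z (t + b) (r + b) + z (t - a) (r + a) < z t r + z (t + b - a) (r + b + a) := by
  have hcone : ∀ x ∈ Icc 0 a, r + |t - x - t| ≤ r + x := fun x hx => by
    simp [abs_of_nonneg hx.1]
  have hdiff : ∀ {t' r'}, R + |t'| < r' → DifferentiableAt ℝ (uncurry z) (t', r') := fun h' =>
    (hz.contDiffAt (extRegion_mem_nhds h')).differentiableAt two_ne_zero
  have hlt := lt_of_forall_hasDerivAt_pos
    (f := fun x => z (t + b - x) (r + b + x) - z (t - x) (r + x)) ha
    (fun x hx => by
      have hmem := add_abs_lt_of_mem_cone h (hcone x hx)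
      have hmem' : R + |t + b - x| < r + b + x :=
        add_abs_lt_of_mem_cone hmem (by
          rw [show t + b - x - (t - x) = b by ring, abs_of_pos hb]; linarith)
      exact (hasDerivAt_incoming_ray (hdiff hmem')).sub (hasDerivAt_incoming_ray (hdiff hmem)))
    (fun x hx => by
      have hray := nullDeriv_lt_ray hz (add_abs_lt_of_mem_cone h (hcone x hx)) (b := b)
        (fun t' r' h' => hbox t' r' (by
          linarith [abs_sub_le t' (t - x) t, hcone x hx])) hb
      rw [sub_add_eq_add_sub, add_right_comm] at hray
      exact sub_pos.2 hray)
  simp only [sub_zero, add_zero] at hlt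
  linarith

lemma pos_of_dalembertian_neg (hz : ContDiffOn ℝ 2 (uncurry z) (extRegion R)) (h : R + |t| < r)
    (hbox : ∀ t' r', r + |t' - t| ≤ r' → dalembertian z t' r' < 0)
    (hnonneg : ∀ t' r', r + |t' - t| ≤ r' → 0 ≤ z t' r')
    (hlim : Tendsto (z t) atTop (𝓝 0)) : 0 < z t r := by
  have hpar : ∀ t' r' a b, r + |t' - t| ≤ r' → 0 < a → 0 < b →
      z (t' + b) (r' + b) + z (t' - a) (r' + a) < z t' r' + z (t' + b - a) (r' + b + a) :=
    fun t' r' a b h' => add_lt_add_of_dalembertian_neg hz (add_abs_lt_of_mem_cone h h')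
      fun t'' r'' h'' => hbox t'' r'' (by linarith [abs_sub_le t'' t' t])
  have hunit := hpar t r 1 1 (by simp) one_pos one_pos
  -- The square of side `n` based at `(t, r)` splits into the unit square and two rectangles.
  have hbound : ∀ n > 1, z t r + z t (r + 2) - z (t + 1) (r + 1) - z (t - 1) (r + 1) ≤
      z t r + z t (r + 2 * n) := by
    intro n hn
    have hleft := hpar (t - 1) (r + 1) (n - 1) 1 (by simp) (by linarith) one_pos
    have hright := hpar (t + 1) (r + 1) n (n - 1) (by simp) (by linarith) (by linarith)
    have hnonneg₁ := hnonneg (t + n) (r + n) (by simp [abs_of_pos (one_pos.trans hn)])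
    have hnonneg₂ := hnonneg (t - n) (r + n) (by simp [abs_of_pos (one_pos.trans hn)])
    ring_nf at *
    linarith
  have hlim' : Tendsto (fun n => z t r + z t (r + 2 * n)) atTop (𝓝 (z t r + 0)) :=
    (hlim.comp (tendsto_atTop_add_const_left _ r
      (tendsto_id.const_mul_atTop two_pos))).const_add (z t r)
  have hle := ge_of_tendsto hlim' ((eventually_gt_atTop 1).mono hbound)
  ring_nf at *
  linarith

end Parallelogram

/-- `f = o(h(r))` as `r → ∞`, uniformly in `t`, over the exterior region of `R`. -/
def IsExtLittleO (R : ℝ) (f : ℝ → ℝ → ℝ) (h : ℝ → ℝ) : Prop :=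
  ∀ ε > 0, ∃ ρ, ∀ t r, R + |t| < r → ρ ≤ r → |f t r| ≤ ε * h r

lemma tendsto_snd_cocompact_inf_principal (R : ℝ) :
    Tendsto Prod.snd (cocompact (ℝ × ℝ) ⊓ 𝓟 {q : ℝ × ℝ | R + |q.1| ≤ q.2}) atTop := by
  have hnorm : Tendsto (fun q : ℝ × ℝ => ‖q‖ - 2 * |R|)
      (cocompact (ℝ × ℝ) ⊓ 𝓟 {q : ℝ × ℝ | R + |q.1| ≤ q.2}) atTop :=
    tendsto_atTop_add_const_right _ _ (tendsto_norm_cocompact_atTop.mono_left inf_le_left)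
  refine tendsto_atTop_mono' _ ?_ hnorm
  filter_upwards [mem_inf_of_right (mem_principal_self _)] with q hq
  have hq' : R + |q.1| ≤ q.2 := hq
  have hle : ‖q‖ ≤ q.2 + 2 * |R| := by
    simp only [Prod.norm_def, Real.norm_eq_abs, max_le_iff, abs_le (a := q.2)]
    refine ⟨?_, ?_, ?_⟩ <;>
      linarith [hq', neg_abs_le R, abs_nonneg R, abs_nonneg q.1]
  linarith

lemma exists_forall_abs_le_mul_of_isExtLittleO {R t r : ℝ} {φ : ℝ → ℝ → ℝ} {w : ℝ → ℝ}
    (hφ : ContinuousOn (uncurry φ) (extRegion R)) (hw : ContinuousOn w (Ioi R))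
    (hw_pos : ∀ r, R < r → 0 < w r) (hsmall : IsExtLittleO R φ w)
    (h : R + |t| < r) (hne : φ t r ≠ 0) :
    ∃ t₀ r₀, R + |t₀| < r₀ ∧ φ t₀ r₀ ≠ 0 ∧ ∀ t' r', r₀ + |t' - t₀| ≤ r' →
      |φ t' r'| ≤ |φ t₀ r₀| / w r₀ * w r' := by
  obtain ⟨S, hRS, hSr⟩ := exists_between (show R < r - |t| by linarith)
  have hcone : ∀ {t' r'}, S + |t'| ≤ r' → R + |t'| < r' := fun h' => by linarith
  have hmem_tr : (t, r) ∈ {q : ℝ × ℝ | S + |q.1| ≤ q.2} := (lt_sub_iff_add_lt.1 hSr).le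
  have hw_snd : ∀ q ∈ {q : ℝ × ℝ | S + |q.1| ≤ q.2}, 0 < w q.2 := fun q hq =>
    hw_pos _ (lt_of_add_abs_lt (hcone hq))
  have hpos : 0 < |φ t r| / w r := div_pos (abs_pos.2 hne) (hw_pos r (lt_of_add_abs_lt h))
  obtain ⟨ρ, hρ⟩ := hsmall _ hpos
  have hcont : ContinuousOn (fun q : ℝ × ℝ => |φ q.1 q.2| / w q.2)
      {q | S + |q.1| ≤ q.2} :=
    (hφ.mono fun q hq => hcone hq).abs.div (hw.comp continuousOn_snd fun q hq =>
      lt_of_add_abs_lt (hcone hq)) fun q hq => (hw_snd q hq).ne'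
  obtain ⟨⟨t₀, r₀⟩, hmem, hmax⟩ := hcont.exists_isMaxOn'
    (isClosed_le (by fun_prop) (by fun_prop)) (x₀ := (t, r)) hmem_tr (by
      filter_upwards [tendsto_snd_cocompact_inf_principal S (eventually_ge_atTop ρ),
        mem_inf_of_right (mem_principal_self _)] with q hq hqS
      exact (div_le_iff₀ (hw_snd q hqS)).2 (hρ q.1 q.2 (hcone hqS) hq))
  refine ⟨t₀, r₀, hcone hmem, ?_, fun t' r' h' => ?_⟩
  · have hle : |φ t r| / w r ≤ |φ t₀ r₀| / w r₀ := hmax hmem_tr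
    intro hzero
    rw [hzero, abs_zero, zero_div] at hle
    exact hpos.not_ge hle
  · have hmem' : (t', r') ∈ {q : ℝ × ℝ | S + |q.1| ≤ q.2} := by
      have hmem₀ : S + |t₀| ≤ r₀ := hmem
      change S + |t'| ≤ r'
      linarith [abs_sub_abs_le_abs_sub t' t₀]
    exact (div_le_iff₀ (hw_snd _ hmem')).1 (hmax hmem')

lemma dalembertian_radial_sub {w : ℝ → ℝ} {φ : ℝ → ℝ → ℝ} {t r : ℝ} (hw : ContDiffAt ℝ 2 w r)
    (hφ : ContDiffAt ℝ 2 (uncurry φ) (t, r)) (a b : ℝ) :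
    dalembertian (fun t r => a * w r - b * φ t r) t r =
      -(a * deriv (deriv w) r) - b * dalembertian φ t r := by
  have hdtu : dtu (fun t r => a * w r - b * φ t r) = fun t r => -(b * dtu φ t r) := by
    funext t r
    simp only [dtu, deriv_const_sub, deriv_const_mul_field]
  have hdtdt : dtu (fun t r => -(b * dtu φ t r)) t r = -(b * dtu (dtu φ) t r) := by
    simp only [dtu, deriv.fun_neg, deriv_const_mul_field]
  have hdru : dru (fun t r => a * w r - b * φ t r) t =ᶠ[𝓝 r]
      fun x => a * deriv w x - b * dru φ t x := by
    filter_upwards [hw.eventually (by simp), (Continuous.prodMk_right t).continuousAt.eventually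
      (eventually_differentiableAt_of_contDiffAt hφ one_le_two)] with x hwx hφx
    exact (((hwx.differentiableAt two_ne_zero).hasDerivAt.const_mul a).sub
      ((hasDerivAt_radius hφx).const_mul b)).deriv
  have hw' : HasDerivAt (deriv w) (deriv (deriv w) r) r :=
    ((hw.derivWithin (m := 1) (by norm_num)).differentiableAt one_ne_zero).hasDerivAt
  have hdrdr : dru (dru fun t r => a * w r - b * φ t r) t r = _ := hdru.deriv_eq.trans
    ((hw'.const_mul a).sub ((hasDerivAt_radius (differentiableAt_dru hφ)).const_mul b)).deriv
  rw [dalembertian, hdtu, hdtdt, hdrdr, dalembertian]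
  ring

lemma eq_zero_of_barrier {R : ℝ} {φ : ℝ → ℝ → ℝ} {w q : ℝ → ℝ}
    (hφ : ContDiffOn ℝ 2 (uncurry φ) (extRegion R)) (hw : ContDiffOn ℝ 2 w (Ioi R))
    (hw_pos : ∀ r, R < r → 0 < w r) (hw_lim : Tendsto w atTop (𝓝 0))
    (hq : ∀ r, R < r → 0 ≤ q r) (hbarrier : ∀ r, R < r → q r * w r < deriv (deriv w) r)
    (hbox : ∀ t r, R + |t| < r → |dalembertian φ t r| ≤ q r * |φ t r|)
    (hsmall : IsExtLittleO R φ w) {t r : ℝ} (h : R + |t| < r) : φ t r = 0 := by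
  by_contra hne
  obtain ⟨t₀, r₀, h₀, hne₀, hmax⟩ :=
    exists_forall_abs_le_mul_of_isExtLittleO hφ.continuousOn hw.continuousOn hw_pos hsmall h hne
  have hw₀ : 0 < w r₀ := hw_pos r₀ (lt_of_add_abs_lt h₀)
  set M := |φ t₀ r₀| / w r₀
  have hM : 0 < M := div_pos (abs_pos.2 hne₀) hw₀
  obtain ⟨σ, hσ, hσφ⟩ : ∃ σ : ℝ, |σ| = 1 ∧ |φ t₀ r₀| = σ * φ t₀ r₀ :=
    RCLike.exists_norm_eq_mul_self (φ t₀ r₀)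
  have habs : ∀ x : ℝ, |σ * x| = |x| := fun x => by rw [abs_mul, hσ, one_mul]
  -- `M w` touches `σ φ` from above at `(t₀, r₀)`.
  have htouch : M * w r₀ - σ * φ t₀ r₀ = 0 := by
    rw [← hσφ, div_mul_cancel₀ _ hw₀.ne', sub_self]
  refine (pos_of_dalembertian_neg (z := fun t r => M * w r - σ * φ t r) ?_ h₀ ?_ ?_ ?_).ne' htouch
  · exact (contDiffOn_const.mul (hw.comp contDiffOn_snd fun q hq => lt_of_add_abs_lt hq)).sub
      (contDiffOn_const.mul hφ)
  · intro t' r' h'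
    have hmem := add_abs_lt_of_mem_cone h₀ h'
    have hr' := lt_of_add_abs_lt hmem
    rw [dalembertian_radial_sub (hw.contDiffAt (Ioi_mem_nhds hr'))
      (hφ.contDiffAt (extRegion_mem_nhds hmem))]
    have hlt : |σ * dalembertian φ t' r'| < M * deriv (deriv w) r' :=
      calc |σ * dalembertian φ t' r'| ≤ q r' * |φ t' r'| := (habs _).trans_le (hbox _ _ hmem)
        _ ≤ q r' * (M * w r') := mul_le_mul_of_nonneg_left (hmax _ _ h') (hq r' hr')
        _ = M * (q r' * w r') := by ring
        _ < M * deriv (deriv w) r' := mul_lt_mul_of_pos_left (hbarrier r' hr') hM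
    linarith [neg_abs_le (σ * dalembertian φ t' r')]
  · intro t' r' h'
    linarith [le_abs_self (σ * φ t' r'), habs (φ t' r'), hmax t' r' h']
  · have hφ_lim : Tendsto (fun r => σ * φ t₀ r) atTop (𝓝 0) := by
      refine squeeze_zero_norm' ?_ (by simpa using hw_lim.const_mul M)
      filter_upwards [eventually_ge_atTop r₀] with r hr
      rw [Real.norm_eq_abs, habs]
      exact hmax t₀ r (by simpa using hr)
    simpa using (hw_lim.const_mul M).sub hφ_lim

/-! ### The radial wave operator in dimension `2m + 1` -/

/-- The Liouville transform `r^m f`. It turns `∂_t² - ∂_r² - (2m/r) ∂_r`, the radial wave operator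
in dimension `2m + 1`, into the one-dimensional wave operator with an inverse square potential. -/
noncomputable def liouville (m : ℝ) (f : ℝ → ℝ → ℝ) (t r : ℝ) : ℝ := r ^ m * f t r

section Liouville

variable {m t r : ℝ} {f : ℝ → ℝ → ℝ}

lemma contDiffAt_liouville {n : WithTop ℕ∞} (hr : r ≠ 0) (hf : ContDiffAt ℝ n (uncurry f) (t, r)) :
    ContDiffAt ℝ n (uncurry (liouville m f)) (t, r) :=
  (contDiffAt_snd.rpow_const_of_ne hr).mul hf

lemma contDiffOn_liouville {R : ℝ} {n : WithTop ℕ∞} (hR : 0 ≤ R)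
    (hf : ContDiffOn ℝ n (uncurry f) (extRegion R)) :
    ContDiffOn ℝ n (uncurry (liouville m f)) (extRegion R) := fun _ hq =>
  (contDiffAt_liouville (pos_of_add_abs_lt hR hq).ne'
    (hf.contDiffAt (extRegion_mem_nhds hq))).contDiffWithinAt

lemma dtu_liouville (m : ℝ) (f : ℝ → ℝ → ℝ) : dtu (liouville m f) = liouville m (dtu f) := by
  funext t r
  exact deriv_const_mul_field _

lemma hasDerivAt_liouville_radius (hr : 0 < r) (hf : DifferentiableAt ℝ (uncurry f) (t, r)) :
    HasDerivAt (liouville m f t) (liouville m (dru f) t r + m * liouville (m - 1) f t r) r := by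
  refine ((Real.hasDerivAt_rpow_const (p := m) (Or.inl hr.ne')).mul
    (hasDerivAt_radius hf)).congr_deriv ?_
  simp only [liouville]
  ring

lemma dru_dru_liouville (hr : 0 < r) (hf : ContDiffAt ℝ 2 (uncurry f) (t, r)) :
    dru (dru (liouville m f)) t r = liouville m (dru (dru f)) t r +
      2 * m * liouville (m - 1) (dru f) t r + m * (m - 1) * liouville (m - 2) f t r := by
  have hdru : dru (liouville m f) t =ᶠ[𝓝 r]
      fun x => liouville m (dru f) t x + m * liouville (m - 1) f t x := by
    filter_upwards [eventually_gt_nhds hr, (Continuous.prodMk_right t).continuousAt.eventually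
      (eventually_differentiableAt_of_contDiffAt hf one_le_two)] with x hx hfx
    exact (hasDerivAt_liouville_radius hx hfx).deriv
  have hf₁ := hasDerivAt_liouville_radius (m := m - 1) hr (hf.differentiableAt two_ne_zero)
  have hf₂ := hasDerivAt_liouville_radius (m := m) hr (differentiableAt_dru hf)
  refine (hdru.deriv_eq.trans (hf₂.add (hf₁.const_mul m)).deriv).trans ?_
  rw [show m - 1 - 1 = m - 2 by ring]
  ring

lemma dalembertian_liouville (hr : 0 < r) (hf : ContDiffAt ℝ 2 (uncurry f) (t, r)) :
    dalembertian (liouville m f) t r =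
      r ^ m * (dalembertian f t r - 2 * m / r * dru f t r) -
        m * (m - 1) / r ^ 2 * liouville m f t r := by
  rw [dalembertian, dtu_liouville, dtu_liouville, dru_dru_liouville hr hf]
  simp only [liouville, dalembertian, Real.rpow_sub hr, Real.rpow_one, Real.rpow_two]
  ring

lemma abs_dalembertian_liouville_le {P : ℝ} (hr : 0 < r) (hf : ContDiffAt ℝ 2 (uncurry f) (t, r))
    (hwave : dalembertian f t r - 2 * m / r * dru f t r = P * f t r) :
    |dalembertian (liouville m f) t r| ≤
      (|P| + |m * (m - 1)| / r ^ 2) * |liouville m f t r| := by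
  rw [dalembertian_liouville hr hf, hwave]
  calc |r ^ m * (P * f t r) - m * (m - 1) / r ^ 2 * liouville m f t r|
      = |P - m * (m - 1) / r ^ 2| * |liouville m f t r| := by
        rw [← abs_mul]
        simp only [liouville]
        ring_nf
    _ ≤ (|P| + |m * (m - 1)| / r ^ 2) * |liouville m f t r| := by
        gcongr
        refine (abs_sub _ _).trans_eq ?_
        rw [abs_div, abs_of_pos (by positivity : 0 < r ^ 2)]

lemma nullDeriv_liouville (hr : 0 < r) (hf : DifferentiableAt ℝ (uncurry f) (t, r)) (σ : ℝ) :
    nullDeriv σ (liouville m f) t r = r ^ m * nullDeriv σ f t r + m * r ^ (m - 1) * f t r := by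
  rw [nullDeriv, dtu_liouville, dru, (hasDerivAt_liouville_radius hr hf).deriv]
  simp only [liouville, nullDeriv]
  ring

end Liouville

/-! ### Unique continuation from infinity -/

/-- The radial function `r^(1-m) exp(k/r)`: up to the exponential, the decaying solution of
`w'' = (m(m-1)/r²) w`, with the exponential absorbing a further potential of size `k²/r⁴`. -/
noncomputable def radialBarrier (m k r : ℝ) : ℝ := r ^ (1 - m) * Real.exp (k / r)

section RadialBarrier

variable {m k r : ℝ}

lemma radialBarrier_pos (hr : 0 < r) : 0 < radialBarrier m k r := by
  unfold radialBarrier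
  positivity

lemma rpow_le_radialBarrier (hk : 0 ≤ k) (hr : 0 < r) : r ^ (1 - m) ≤ radialBarrier m k r :=
  le_mul_of_one_le_right (by positivity) (Real.one_le_exp (by positivity))

lemma contDiffAt_radialBarrier {n : WithTop ℕ∞} (hr : r ≠ 0) :
    ContDiffAt ℝ n (radialBarrier m k) r :=
  (contDiffAt_id.rpow_const_of_ne hr).mul (contDiffAt_const.div contDiffAt_id hr).exp

lemma tendsto_radialBarrier_atTop (hm : 1 < m) : Tendsto (radialBarrier m k) atTop (𝓝 0) := by
  have hpow : Tendsto (fun r : ℝ => r ^ (1 - m)) atTop (𝓝 0) := by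
    simpa using tendsto_rpow_neg_atTop (sub_pos.2 hm)
  unfold radialBarrier
  simpa using hpow.mul ((tendsto_const_nhds (x := k)).div_atTop tendsto_id).rexp

lemma hasDerivAt_radialBarrier (hr : 0 < r) :
    HasDerivAt (radialBarrier m k) (radialBarrier m k r * ((1 - m) / r - k / r ^ 2)) r := by
  refine ((Real.hasDerivAt_rpow_const (p := 1 - m) (Or.inl hr.ne')).mul
    ((hasDerivAt_const r k).fun_div (hasDerivAt_id' r) hr.ne').exp).congr_deriv ?_
  simp only [radialBarrier, Real.rpow_sub_one hr.ne']
  ring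

lemma deriv_deriv_radialBarrier (hr : 0 < r) :
    deriv (deriv (radialBarrier m k)) r =
      (m * (m - 1) / r ^ 2 + 2 * m * k / r ^ 3 + k ^ 2 / r ^ 4) * radialBarrier m k r := by
  have hderiv : deriv (radialBarrier m k) =ᶠ[𝓝 r]
      fun x => radialBarrier m k x * ((1 - m) / x - k / x ^ 2) :=
    (eventually_gt_nhds hr).mono fun x hx => (hasDerivAt_radialBarrier hx).deriv
  have hfactor : HasDerivAt (fun x => (1 - m) / x - k / x ^ 2)
      (-(1 - m) / r ^ 2 + 2 * k / r ^ 3) r := by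
    refine (((hasDerivAt_const r (1 - m)).fun_div (hasDerivAt_id' r) hr.ne').fun_sub
      ((hasDerivAt_const r k).fun_div (hasDerivAt_pow 2 r) (by positivity))).congr_deriv ?_
    field_simp
    ring
  rw [hderiv.deriv_eq, ((hasDerivAt_radialBarrier hr).fun_mul hfactor).deriv]
  field_simp
  ring

end RadialBarrier

lemma IsExtLittleO.liouville {R m k : ℝ} {v : ℝ → ℝ → ℝ} (hR : 0 ≤ R) (hk : 0 ≤ k)
    (hv : IsExtLittleO R v fun r => r ^ (1 - 2 * m)) :
    IsExtLittleO R (liouville m v) (radialBarrier m k) := by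
  intro ε hε
  obtain ⟨ρ, hρ⟩ := hv ε hε
  refine ⟨ρ, fun t r h hr => ?_⟩
  have hr₀ := pos_of_add_abs_lt hR h
  calc |r ^ m * v t r| = r ^ m * |v t r| := by rw [abs_mul, abs_of_pos (by positivity)]
    _ ≤ r ^ m * (ε * r ^ (1 - 2 * m)) := by gcongr; exact hρ t r h hr
    _ = ε * r ^ (1 - m) := by rw [mul_left_comm, ← Real.rpow_add hr₀]; ring_nf
    _ ≤ ε * radialBarrier m k r := by gcongr; exact rpow_le_radialBarrier hk hr₀

/-- The decay required of `v` is that of the fundamental solution in dimension `2m + 1`. -/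
lemma eq_zero_of_isExtLittleO_of_wave_eq {R m k : ℝ} {v P : ℝ → ℝ → ℝ} (hR : 0 ≤ R) (hm : 1 < m)
    (hk : 0 < k) (hv : ContDiffOn ℝ 2 (uncurry v) (extRegion R))
    (hwave : ∀ t r, R + |t| < r → dalembertian v t r - 2 * m / r * dru v t r = P t r * v t r)
    (hP : ∀ t r, R + |t| < r → |P t r| ≤ k ^ 2 / r ^ 4)
    (hsmall : IsExtLittleO R v fun r => r ^ (1 - 2 * m)) {t r : ℝ} (h : R + |t| < r) :
    v t r = 0 := by
  have hzero : liouville m v t r = 0 := by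
    refine eq_zero_of_barrier (w := radialBarrier m k)
      (q := fun r => k ^ 2 / r ^ 4 + m * (m - 1) / r ^ 2)
      (contDiffOn_liouville hR hv)
      (fun r hr => (contDiffAt_radialBarrier (hR.trans_lt hr).ne').contDiffWithinAt)
      (fun r hr => radialBarrier_pos (hR.trans_lt hr)) (tendsto_radialBarrier_atTop hm)
      (fun r hr => by have := hR.trans_lt hr; have := sub_pos.2 hm; positivity) ?_ ?_
      (hsmall.liouville hR hk.le) h
    · intro r hr
      have hr₀ := hR.trans_lt hr
      rw [deriv_deriv_radialBarrier hr₀]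
      refine mul_lt_mul_of_pos_right ?_ (radialBarrier_pos hr₀)
      have : 0 < 2 * m * k / r ^ 3 := by positivity
      linarith
    · intro t r h
      have hr₀ := pos_of_add_abs_lt hR h
      refine (abs_dalembertian_liouville_le hr₀ (hv.contDiffAt (extRegion_mem_nhds h))
        (hwave t r h)).trans ?_
      rw [abs_of_pos (mul_pos (one_pos.trans hm) (sub_pos.2 hm))]
      gcongr
      exact hP t r h
  exact (mul_eq_zero.1 hzero).resolve_left (Real.rpow_pos_of_pos (pos_of_add_abs_lt hR h) m).ne'

/-! ### The exterior energy and radial decay -/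

/-- The energy density `(|∂_t u|² + |∂_r u|²) r³` of a radial function in four space dimensions,
with respect to `dr`. -/
noncomputable def energyDensity (u : ℝ → ℝ → ℝ) (t r : ℝ) : ℝ :=
  (dtu u t r ^ 2 + dru u t r ^ 2) * r ^ 3

/-- The energy of `u` at time `t` in the exterior region of `R`. Its limits at `±∞` are the
subject of `ExtEnergyVanishes`. -/
noncomputable def extEnergy (R : ℝ) (u : ℝ → ℝ → ℝ) (t : ℝ) : ℝ :=
  ∫ r in Ioi (R + |t|), energyDensity u t r

lemma energyDensity_nonneg {u : ℝ → ℝ → ℝ} {t r : ℝ} (hr : 0 ≤ r) : 0 ≤ energyDensity u t r := by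
  unfold energyDensity
  positivity

section Energy

variable {R : ℝ} {u : ℝ → ℝ → ℝ}

lemma ae_energyDensity_nonneg (hR : 0 ≤ R) (t : ℝ) :
    0 ≤ᵐ[volume.restrict (Ioi (R + |t|))] energyDensity u t := by
  filter_upwards [ae_restrict_mem measurableSet_Ioi] with r hr
  exact energyDensity_nonneg (pos_of_add_abs_lt hR hr).le

lemma aestronglyMeasurable_energyDensity (hu : ContDiffOn ℝ 2 (uncurry u) (extRegion R)) (t : ℝ) :
    AEStronglyMeasurable (energyDensity u t) (volume.restrict (Ioi (R + |t|))) := by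
  refine ContinuousOn.aestronglyMeasurable ?_ measurableSet_Ioi
  exact (((continuousOn_slice (continuousOn_dtu hu) t).pow 2).add
    ((continuousOn_slice (continuousOn_dru hu) t).pow 2)).mul (by fun_prop)

lemma lintegral_energyDensity (hR : 0 ≤ R) (hu : ContDiffOn ℝ 2 (uncurry u) (extRegion R))
    (t : ℝ) :
    ∫⁻ r in Ioi (R + |t|), ENNReal.ofReal (energyDensity u t r) =
      eH (R + |t|) (u t) (dtu u t) ^ 2 := by
  have hdru : AEMeasurable (fun r => ENNReal.ofReal (dru u t r ^ 2 * r ^ 3))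
      (volume.restrict (Ioi (R + |t|))) :=
    ((((continuousOn_slice (continuousOn_dru hu) t).pow 2).mul (by fun_prop)).aemeasurable
      measurableSet_Ioi).ennreal_ofReal
  have hsplit : ∫⁻ r in Ioi (R + |t|), ENNReal.ofReal (energyDensity u t r) =
      (∫⁻ r in Ioi (R + |t|), ENNReal.ofReal (dru u t r ^ 2 * r ^ 3)) +
        ∫⁻ r in Ioi (R + |t|), ENNReal.ofReal (dtu u t r ^ 2 * r ^ 3) := by
    rw [← lintegral_add_left' hdru]
    refine setLIntegral_congr_fun measurableSet_Ioi fun r hr => ?_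
    have hr₀ := pos_of_add_abs_lt hR hr
    rw [← ENNReal.ofReal_add (by positivity) (by positivity), energyDensity]
    ring_nf
  rw [hsplit, eH, ← ENNReal.rpow_mul_natCast]
  simp [dru]

lemma lintegral_energyDensity_le (hR : 0 ≤ R) (hu : ContDiffOn ℝ 2 (uncurry u) (extRegion R))
    (t : ℝ) :
    ∫⁻ r in Ioi (R + |t|), ENNReal.ofReal (energyDensity u t r) ≤ supH R u ^ 2 := by
  rw [lintegral_energyDensity hR hu t]
  gcongr
  exact le_iSup (fun t => eH (R + |t|) (u t) (dtu u t)) t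

lemma integrableOn_energyDensity (hR : 0 ≤ R) (hu : ContDiffOn ℝ 2 (uncurry u) (extRegion R))
    (hsup : supH R u < ⊤) (t : ℝ) : IntegrableOn (energyDensity u t) (Ioi (R + |t|)) :=
  ⟨aestronglyMeasurable_energyDensity hu t,
    (hasFiniteIntegral_iff_ofReal (ae_energyDensity_nonneg hR t)).2
      ((lintegral_energyDensity_le hR hu t).trans_lt (ENNReal.pow_lt_top hsup))⟩

lemma extEnergy_le_toReal_supH_sq (hR : 0 ≤ R) (hu : ContDiffOn ℝ 2 (uncurry u) (extRegion R))
    (hsup : supH R u < ⊤) (t : ℝ) : extEnergy R u t ≤ (supH R u).toReal ^ 2 := by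
  rw [extEnergy, integral_eq_lintegral_of_nonneg_ae (ae_energyDensity_nonneg hR t)
    (aestronglyMeasurable_energyDensity hu t), ← ENNReal.toReal_pow]
  exact ENNReal.toReal_mono (ENNReal.pow_lt_top hsup).ne (lintegral_energyDensity_le hR hu t)

lemma ExtEnergyVanishes.tendsto_extEnergy_cocompact (h : ExtEnergyVanishes R u) :
    Tendsto (extEnergy R u) (cocompact ℝ) (𝓝 0) := by
  rw [cocompact_eq_atBot_atTop]
  exact h.2.sup h.1

end Energy

lemma abs_le_sq_mul_div_add_div {c w : ℝ} (hc : 0 < c) (hw : 0 < w) (y : ℝ) :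
    |y| ≤ y ^ 2 * w / (2 * c) + c / (2 * w) := by
  have hsq : y ^ 2 * w / (2 * c) + c / (2 * w) - |y| = (|y| * w - c) ^ 2 / (2 * c * w) := by
    rw [← sq_abs y]
    field_simp
    ring
  have hnonneg : 0 ≤ (|y| * w - c) ^ 2 / (2 * c * w) := by positivity
  linarith

lemma abs_sub_le_div_of_integral_sq_mul_cube_le {v : ℝ → ℝ} {r s ε : ℝ} (hr : 0 < r)
    (hε : 0 < ε) (hrs : r ≤ s) (hv : ∀ x ∈ Icc r s, DifferentiableAt ℝ v x)
    (hint : IntegrableOn (fun x => deriv v x ^ 2 * x ^ 3) (Ioi r))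
    (hle : ∫ x in Ioi r, deriv v x ^ 2 * x ^ 3 ≤ ε ^ 2) : |v s - v r| ≤ ε / r := by
  set g : ℝ → ℝ := fun x => deriv v x ^ 2 * x ^ 3 / (2 * (r * ε)) + r * ε / 2 * x ^ (-3 : ℝ)
  have hcube : ∀ {x : ℝ}, 0 < x → x ^ (-3 : ℝ) = (x ^ 3)⁻¹ := fun hx => by
    rw [Real.rpow_neg hx.le, ← Real.rpow_natCast]
    norm_num
  have hpow : IntegrableOn (fun x : ℝ => x ^ (-3 : ℝ)) (Ioi r) :=
    integrableOn_Ioi_rpow_of_lt (by norm_num) hr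
  have hg : IntegrableOn g (Ioi r) := (hint.div_const _).add (hpow.const_mul _)
  have hderiv_le : ∀ x ∈ Ioi r, |deriv v x| ≤ g x := fun x hx => by
    have hx₀ : 0 < x := hr.trans hx
    refine (abs_le_sq_mul_div_add_div (mul_pos hr hε) (pow_pos hx₀ 3) _).trans_eq ?_
    simp only [g, hcube hx₀]
    ring
  have hg_nonneg : 0 ≤ᵐ[volume.restrict (Ioi r)] g := by
    filter_upwards [ae_restrict_mem measurableSet_Ioi] with x hx
    exact (abs_nonneg _).trans (hderiv_le x hx)
  calc |v s - v r| ≤ ∫ x in r..s, g x :=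
        norm_sub_le_integral_of_norm_deriv_le_of_le hrs
          (fun x hx => (hv x hx).continuousAt.continuousWithinAt)
          (fun x hx => (hv x (Ioo_subset_Icc_self hx)).differentiableWithinAt)
          (ae_of_all _ fun x hx => hderiv_le x hx.1)
          ((intervalIntegrable_iff_integrableOn_Ioc_of_le hrs).2 (hg.mono_set Ioc_subset_Ioi_self))
    _ ≤ ∫ x in Ioi r, g x := by
        rw [intervalIntegral.integral_of_le hrs]
        exact setIntegral_mono_set hg hg_nonneg Ioc_subset_Ioi_self.eventuallyLE
    _ = (∫ x in Ioi r, deriv v x ^ 2 * x ^ 3) / (2 * (r * ε)) + ε / r / 4 := by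
        rw [integral_add (hint.div_const _) (hpow.const_mul _), integral_div, integral_const_mul,
          integral_Ioi_rpow_of_lt (by norm_num) hr, Real.rpow_add_one hr.ne', hcube hr]
        field_simp
        ring
    _ ≤ ε ^ 2 / (2 * (r * ε)) + ε / r / 4 := by gcongr
    _ = 3 / 4 * (ε / r) := by field_simp; norm_num
    _ ≤ ε / r := by linarith [div_pos hε hr]

lemma exists_gt_abs_lt_of_lintegral_lt_top {v : ℝ → ℝ} {a b r δ : ℝ} (hb : 0 < b) (hr : 0 < r)
    (har : a ≤ r) (hδ : 0 < δ)
    (hv : ∫⁻ x in Ioi a, ENNReal.ofReal (|v x| ^ b * x ^ 3) < ⊤) : ∃ s > r, |v s| < δ := by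
  by_contra! hlow
  refine hv.not_ge ?_
  calc (⊤ : ℝ≥0∞) = ∫⁻ _ in Ioi r, ENNReal.ofReal (δ ^ b * r ^ 3) := by
        rw [setLIntegral_const, Real.volume_Ioi, ENNReal.mul_top]
        simpa using (by positivity : 0 < δ ^ b * r ^ 3)
    _ ≤ ∫⁻ x in Ioi r, ENNReal.ofReal (|v x| ^ b * x ^ 3) := by
        refine setLIntegral_mono' measurableSet_Ioi fun x hx => ENNReal.ofReal_le_ofReal ?_
        have hrx : r < x := hx
        gcongr
        exact hlow x hx
    _ ≤ ∫⁻ x in Ioi a, ENNReal.ofReal (|v x| ^ b * x ^ 3) :=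
        lintegral_mono_set (Ioi_subset_Ioi har)

lemma dense_setOf_lintegral_lt_top_of_eLL_lt_top {a b R : ℝ} {u : ℝ → ℝ → ℝ} (ha : 0 < a)
    (hb : 0 < b) (hu : eLL a b R u < ⊤) :
    Dense {t | ∫⁻ r in Ioi (R + |t|), ENNReal.ofReal (|u t r| ^ b * r ^ 3) < ⊤} := by
  refine dense_of_exists_between fun t₁ t₂ ht => ?_
  by_contra! hinf
  refine hu.not_ge (top_le_iff.2 ?_)
  rw [eLL, ENNReal.rpow_eq_top_iff_of_pos (by positivity), eq_top_iff]
  calc (⊤ : ℝ≥0∞) = ∫⁻ _ in Ioo t₁ t₂, (⊤ : ℝ≥0∞) := by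
        rw [setLIntegral_const, Real.volume_Ioo, ENNReal.top_mul (by simpa using ht)]
    _ ≤ ∫⁻ t in Ioo t₁ t₂,
          (∫⁻ r in Ioi (R + |t|), ENNReal.ofReal (|u t r| ^ b * r ^ 3)) ^ (a / b) := by
        refine setLIntegral_mono' measurableSet_Ioo fun t ht => ?_
        have htop : ∫⁻ r in Ioi (R + |t|), ENNReal.ofReal (|u t r| ^ b * r ^ 3) = ⊤ := by
          by_contra hne
          exact hinf t (lt_top_iff_ne_top.2 hne) ht
        rw [htop, ENNReal.top_rpow_of_pos (by positivity)]
    _ ≤ _ := setLIntegral_le_lintegral _ _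

section RadialDecay

variable {a b R ε : ℝ} {u : ℝ → ℝ → ℝ}

lemma abs_le_div_of_extEnergy_le_of_lintegral_lt_top (hR : 0 ≤ R)
    (hu : ContDiffOn ℝ 2 (uncurry u) (extRegion R)) (hsup : supH R u < ⊤) (hb : 0 < b)
    (hε : 0 < ε) {t r : ℝ}
    (ht : ∫⁻ r in Ioi (R + |t|), ENNReal.ofReal (|u t r| ^ b * r ^ 3) < ⊤)
    (henergy : extEnergy R u t ≤ ε ^ 2) (h : R + |t| < r) : |u t r| ≤ ε / r := by
  have hr := pos_of_add_abs_lt hR h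
  have hint := integrableOn_energyDensity hR hu hsup t
  have hsub : Ioi r ⊆ Ioi (R + |t|) := Ioi_subset_Ioi h.le
  have hdom : ∀ x ∈ Ioi r, dru u t x ^ 2 * x ^ 3 ≤ energyDensity u t x := fun x hx => by
    have hx₀ : 0 < x := hr.trans hx
    exact mul_le_mul_of_nonneg_right (le_add_of_nonneg_left (sq_nonneg _)) (by positivity)
  have hint_dru : IntegrableOn (fun x => dru u t x ^ 2 * x ^ 3) (Ioi r) := by
    refine (hint.mono_set hsub).mono' ?_ ?_
    · exact ContinuousOn.aestronglyMeasurable ((((continuousOn_slice (continuousOn_dru hu) t).mono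
        hsub).pow 2).mul (by fun_prop)) measurableSet_Ioi
    · filter_upwards [ae_restrict_mem measurableSet_Ioi] with x hx
      have hx₀ : 0 < x := hr.trans hx
      rw [Real.norm_of_nonneg (by positivity)]
      exact hdom x hx
  have hle : ∫ x in Ioi r, dru u t x ^ 2 * x ^ 3 ≤ ε ^ 2 :=
    calc _ ≤ ∫ x in Ioi r, energyDensity u t x :=
          setIntegral_mono_on hint_dru (hint.mono_set hsub) measurableSet_Ioi hdom
      _ ≤ extEnergy R u t :=
          setIntegral_mono_set hint (ae_energyDensity_nonneg hR t) hsub.eventuallyLE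
      _ ≤ ε ^ 2 := henergy
  refine le_of_forall_pos_lt_add fun δ hδ => ?_
  obtain ⟨s, hrs, hs⟩ := exists_gt_abs_lt_of_lintegral_lt_top hb hr h.le hδ ht
  have hinc := abs_sub_le_div_of_integral_sq_mul_cube_le (v := u t) hr hε hrs.le
    (fun x hx => (hasDerivAt_radius ((hu.contDiffAt (extRegion_mem_nhds
      (h.trans_le hx.1))).differentiableAt two_ne_zero)).differentiableAt) hint_dru hle
  linarith [abs_sub_abs_le_abs_sub (u t r) (u t s), abs_sub_comm (u t r) (u t s)]

/-- The spacetime norm only controls `u` at almost every time, whence the neighbourhood of `t`. -/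
lemma abs_le_div_of_eventually_extEnergy_le (hR : 0 ≤ R)
    (hu : ContDiffOn ℝ 2 (uncurry u) (extRegion R)) (hsup : supH R u < ⊤) (ha : 0 < a)
    (hb : 0 < b) (hfin : eLL a b R u < ⊤) (hε : 0 < ε) {t r : ℝ}
    (henergy : ∀ᶠ s in 𝓝 t, extEnergy R u s ≤ ε ^ 2) (h : R + |t| < r) : |u t r| ≤ ε / r := by
  have hcont : ContinuousAt (fun s => |u s r|) t :=
    (hasDerivAt_time ((hu.contDiffAt
      (extRegion_mem_nhds h)).differentiableAt two_ne_zero)).continuousAt.abs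
  have hcone : ∀ᶠ s in 𝓝 t, R + |s| < r :=
    (continuous_const.add continuous_abs).continuousAt.eventually_lt_const h
  have hfreq := mem_closure_iff_frequently.1
    (dense_setOf_lintegral_lt_top_of_eLL_lt_top ha hb hfin t)
  exact le_of_tendsto_of_frequently hcont ((hfreq.and_eventually (henergy.and hcone)).mono
    fun s hs => abs_le_div_of_extEnergy_le_of_lintegral_lt_top hR hu hsup hb hε hs.1 hs.2.1 hs.2.2)

end RadialDecay

/-! ### Decay of non-radiative waves in four space dimensions -/

lemma nullDeriv_liouville_sq_le {u : ℝ → ℝ → ℝ} {t r σ C : ℝ} (hσ : |σ| = 1) (hr : 0 < r)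
    (hu : DifferentiableAt ℝ (uncurry u) (t, r)) (hC : |u t r| ≤ C / r) :
    nullDeriv σ (liouville (3 / 2) u) t r ^ 2 ≤ 4 * energyDensity u t r + 9 / 2 * C ^ 2 / r := by
  have hσ2 : σ ^ 2 = 1 := by rw [← sq_abs, hσ, one_pow]
  have hpow₃ : (r ^ (3 / 2 : ℝ)) ^ 2 = r ^ 3 := by
    rw [← Real.rpow_mul_natCast hr.le, ← Real.rpow_natCast]
    norm_num
  have hpow₁ : (r ^ (3 / 2 - 1 : ℝ)) ^ 2 = r := by
    rw [← Real.rpow_mul_natCast hr.le]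
    norm_num
  have hnull : nullDeriv σ u t r ^ 2 ≤ 2 * (dtu u t r ^ 2 + dru u t r ^ 2) := by
    unfold nullDeriv
    linear_combination sq_nonneg (dru u t r + σ * dtu u t r) + 2 * dtu u t r ^ 2 * hσ2
  have husq : r * u t r ^ 2 ≤ C ^ 2 / r := by
    calc r * u t r ^ 2 = r * |u t r| ^ 2 := by rw [sq_abs]
      _ ≤ r * (C / r) ^ 2 := by gcongr
      _ = C ^ 2 / r := by field_simp
  rw [nullDeriv_liouville hr hu]
  calc (r ^ (3 / 2 : ℝ) * nullDeriv σ u t r + 3 / 2 * r ^ (3 / 2 - 1 : ℝ) * u t r) ^ 2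
      ≤ 2 * ((r ^ (3 / 2 : ℝ) * nullDeriv σ u t r) ^ 2 +
          (3 / 2 * r ^ (3 / 2 - 1 : ℝ) * u t r) ^ 2) := add_sq_le
    _ = 2 * r ^ 3 * nullDeriv σ u t r ^ 2 + 9 / 2 * (r * u t r ^ 2) := by
        rw [mul_pow, mul_pow, mul_pow, hpow₃, hpow₁]
        ring
    _ ≤ 2 * r ^ 3 * (2 * (dtu u t r ^ 2 + dru u t r ^ 2)) + 9 / 2 * (C ^ 2 / r) := by gcongr
    _ = 4 * energyDensity u t r + 9 / 2 * C ^ 2 / r := by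
        unfold energyDensity
        ring

section NonRadiativeDecay

variable {R : ℝ} {u : ℝ → ℝ → ℝ}

lemma integral_window_le {C σ T c δ : ℝ} (hR : 0 ≤ R)
    (hu : ContDiffOn ℝ 2 (uncurry u) (extRegion R)) (hsup : supH R u < ⊤)
    (hbound : ∀ t r, R + |t| < r → |u t r| ≤ C / r) (hσ : |σ| = 1) (hc : R < c) (hδ : 0 < δ)
    (hT : 0 < T) :
    ∫ x in (c + T)..(c + T + δ), nullDeriv σ (liouville (3 / 2) u) (σ * T) x ^ 2 ≤
      4 * extEnergy R u (σ * T) + δ * (9 / 2 * C ^ 2 / T) := by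
  have habs : |σ * T| = T := by rw [abs_mul, hσ, one_mul, abs_of_pos hT]
  have hle : c + T ≤ c + T + δ := by linarith
  have hmem : ∀ {x}, c + T ≤ x → R + |σ * T| < x := fun hx => by rw [habs]; linarith
  have hsub : Ioc (c + T) (c + T + δ) ⊆ Ioi (R + |σ * T|) := fun x hx => hmem hx.1.le
  have hint := integrableOn_energyDensity hR hu hsup (σ * T)
  have hint' : IntervalIntegrable (energyDensity u (σ * T)) volume (c + T) (c + T + δ) :=
    (intervalIntegrable_iff_integrableOn_Ioc_of_le hle).2 (hint.mono_set hsub)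
  calc ∫ x in (c + T)..(c + T + δ), nullDeriv σ (liouville (3 / 2) u) (σ * T) x ^ 2
      ≤ ∫ x in (c + T)..(c + T + δ), (4 * energyDensity u (σ * T) x + 9 / 2 * C ^ 2 / T) := by
        refine intervalIntegral.integral_mono_on hle ?_ ((hint'.const_mul 4).add (by simp)) ?_
        · exact (((continuousOn_slice (continuousOn_nullDeriv (contDiffOn_liouville hR hu) σ)
            (σ * T)).mono fun x hx => hmem hx.1).pow 2).intervalIntegrable_of_Icc hle
        · intro x hx
          have hx' := hmem hx.1
          refine (nullDeriv_liouville_sq_le hσ (pos_of_add_abs_lt hR hx') ((hu.contDiffAt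
            (extRegion_mem_nhds hx')).differentiableAt two_ne_zero) (hbound _ _ hx')).trans ?_
          gcongr
          linarith [hx.1]
    _ = 4 * (∫ x in (c + T)..(c + T + δ), energyDensity u (σ * T) x) +
          δ * (9 / 2 * C ^ 2 / T) := by
        rw [intervalIntegral.integral_add (hint'.const_mul 4) (by simp),
          intervalIntegral.integral_const_mul, intervalIntegral.integral_const, smul_eq_mul,
          add_sub_cancel_left]
    _ ≤ 4 * extEnergy R u (σ * T) + δ * (9 / 2 * C ^ 2 / T) := by
        rw [intervalIntegral.integral_of_le hle]
        gcongr
        exact setIntegral_mono_set hint (ae_energyDensity_nonneg hR _) hsub.eventuallyLE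

lemma tendsto_integral_window {C σ c δ : ℝ} (hR : 0 ≤ R)
    (hu : ContDiffOn ℝ 2 (uncurry u) (extRegion R)) (hsup : supH R u < ⊤)
    (hvan : ExtEnergyVanishes R u) (hbound : ∀ t r, R + |t| < r → |u t r| ≤ C / r)
    (hσ : |σ| = 1) (hc : R < c) (hδ : 0 < δ) :
    Tendsto (fun T => ∫ x in (c + T)..(c + T + δ),
      nullDeriv σ (liouville (3 / 2) u) (σ * T) x ^ 2) atTop (𝓝 0) := by
  have hσT : Tendsto (fun T => σ * T) atTop (cocompact ℝ) := by
    rw [← Metric.cobounded_eq_cocompact, ← tendsto_norm_atTop_iff_cobounded]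
    simpa only [norm_mul, Real.norm_eq_abs, hσ, one_mul] using tendsto_abs_atTop_atTop
  have hlim : Tendsto (fun T => 4 * extEnergy R u (σ * T) + δ * (9 / 2 * C ^ 2 / T)) atTop
      (𝓝 0) := by
    simpa using ((hvan.tendsto_extEnergy_cocompact.comp hσT).const_mul 4).add
      ((tendsto_const_nhds.div_atTop tendsto_id).const_mul δ)
  refine tendsto_of_tendsto_of_tendsto_of_le_of_le' tendsto_const_nhds hlim
    (Eventually.of_forall fun T => intervalIntegral.integral_nonneg (by linarith)
      fun x _ => sq_nonneg _) ?_
  filter_upwards [eventually_gt_atTop 0] with T hT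
  exact integral_window_le hR hu hsup hbound hσ hc hδ hT

lemma abs_dtu_le_of_wave_eq {P : ℝ → ℝ → ℝ} {C c κ r₀ : ℝ} (hR : 0 ≤ R)
    (hu : ContDiffOn ℝ 2 (uncurry u) (extRegion R)) (hsup : supH R u < ⊤)
    (hvan : ExtEnergyVanishes R u) (hbound : ∀ t r, R + |t| < r → |u t r| ≤ C / r)
    (hwave : ∀ t r, R + |t| < r →
      dalembertian u t r - 2 * (3 / 2) / r * dru u t r = P t r * u t r)
    (hc : 0 ≤ c) (hP : ∀ t r, R + |t| < r → |P t r| ≤ c / r ^ 2) (hκ : 0 ≤ κ)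
    (hκu : ∀ t r, R + |t| < r → r₀ ≤ r → |u t r| ≤ κ / r)
    {t r : ℝ} (h : R + |t| < r) (hr₀ : r₀ ≤ r) :
    |dtu u t r| ≤ 2 * κ * (c + 3 / 4) / r ^ 2 := by
  have hr := pos_of_add_abs_lt hR h
  have hrpow : ∀ {x : ℝ}, 0 < x → x ^ (-1 / 2 : ℝ) = x ^ (3 / 2 : ℝ) / x ^ 2 ∧
      x ^ (-1 / 2 - 1 : ℝ) = x ^ (3 / 2 : ℝ) / x ^ 3 := fun hx => by
    rw [← Real.rpow_natCast _ 2, ← Real.rpow_natCast _ 3, ← Real.rpow_sub hx, ← Real.rpow_sub hx]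
    norm_num
  have hdtu : |dtu (liouville (3 / 2) u) t r| ≤ 2 * κ * (c + 3 / 4) * r ^ (-1 / 2 : ℝ) := by
    refine abs_dtu_le_of_tendsto_window (B := fun r => 2 * κ * (c + 3 / 4) * r ^ (-1 / 2 : ℝ))
      (contDiffOn_liouville hR hu)
      (fun x hx => (Real.hasDerivAt_rpow_const (Or.inl (hR.trans_lt hx).ne')).const_mul _)
      (fun x hx => by have := hR.trans_lt hx; positivity) (fun s x hsx hx => ?_)
      (fun σ a δ => tendsto_integral_window hR hu hsup hvan hbound) h hr₀
    have hx₀ := pos_of_add_abs_lt hR hsx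
    calc |dalembertian (liouville (3 / 2) u) s x|
        ≤ (|P s x| + |(3 / 2 : ℝ) * (3 / 2 - 1)| / x ^ 2) * |liouville (3 / 2) u s x| :=
          abs_dalembertian_liouville_le hx₀ (hu.contDiffAt (extRegion_mem_nhds hsx))
            (hwave s x hsx)
      _ ≤ (c / x ^ 2 + 3 / 4 / x ^ 2) * (x ^ (3 / 2 : ℝ) * (κ / x)) := by
          rw [liouville, abs_mul (x ^ (3 / 2 : ℝ)), abs_of_pos (Real.rpow_pos_of_pos hx₀ _)]
          gcongr
          · exact hP s x hsx
          · norm_num [abs_of_pos]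
          · exact hκu s x hsx hx
      _ = -(2 * κ * (c + 3 / 4) * (-1 / 2 * x ^ (-1 / 2 - 1 : ℝ))) := by
          rw [(hrpow hx₀).2]
          field_simp
  rw [dtu_liouville, liouville, abs_mul, abs_of_pos (by positivity), (hrpow hr).1] at hdtu
  refine le_of_mul_le_mul_left (hdtu.trans_eq ?_) (by positivity : 0 < r ^ (3 / 2 : ℝ))
  ring

lemma abs_le_mul_abs_of_abs_dtu_le {D t r : ℝ} (hu : ContDiffOn ℝ 1 (uncurry u) (extRegion R))
    (hu₀ : u 0 r = 0) (hD : ∀ s, R + |s| < r → |dtu u s r| ≤ D) (h : R + |t| < r) :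
    |u t r| ≤ D * |t| := by
  have hmem : ∀ s ∈ Icc (-|t|) |t|, R + |s| < r := fun s hs => by linarith [abs_le.2 hs]
  simpa [hu₀] using Convex.norm_image_sub_le_of_norm_hasDerivWithin_le
    (f := fun s => u s r) (f' := fun s => dtu u s r) (x := 0) (y := t)
    (fun s hs => (hasDerivAt_time ((hu.contDiffAt (extRegion_mem_nhds
      (hmem s hs))).differentiableAt one_ne_zero)).hasDerivWithinAt)
    (fun s hs => hD s (hmem s hs)) (convex_Icc _ _) (by simp) ⟨neg_abs_le t, le_abs_self t⟩

/-- For bounded times the decay comes from vanishing initial data, for large times from the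
smallness of the energy. -/
lemma isExtLittleO_inv_of_abs_dtu_le {a b D : ℝ} (hR : 0 ≤ R)
    (hu : ContDiffOn ℝ 2 (uncurry u) (extRegion R)) (hsup : supH R u < ⊤)
    (hvan : ExtEnergyVanishes R u) (ha : 0 < a) (hb : 0 < b) (hfin : eLL a b R u < ⊤)
    (hu₀ : ∀ r, R < r → u 0 r = 0) (hD : ∀ t r, R + |t| < r → |dtu u t r| ≤ D / r ^ 2) :
    IsExtLittleO R u fun r => r⁻¹ := by
  intro ε hε
  have hev : ∀ᶠ t in cocompact ℝ, extEnergy R u t ≤ ε ^ 2 :=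
    hvan.tendsto_extEnergy_cocompact.eventually_le_const (by positivity)
  obtain ⟨T, -, hT⟩ := hasBasis_cobounded_norm.eventually_iff.1
    (Metric.cobounded_eq_cocompact (α := ℝ) ▸ hev)
  refine ⟨D * T / ε, fun t r h hr => ?_⟩
  have hr₀ := pos_of_add_abs_lt hR h
  rcases le_or_gt |t| T with htT | htT
  · have hD₀ : 0 ≤ D / r ^ 2 := (abs_nonneg _).trans (hD t r h)
    calc |u t r| ≤ D / r ^ 2 * |t| :=
          abs_le_mul_abs_of_abs_dtu_le (hu.of_le one_le_two) (hu₀ r (lt_of_add_abs_lt h))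
            (fun s hs => hD s r hs) h
      _ ≤ D / r ^ 2 * T := by gcongr
      _ = D * T / r ^ 2 := by ring
      _ ≤ r * ε / r ^ 2 := by gcongr ?_ / _; exact (div_le_iff₀ hε).1 hr
      _ = ε * r⁻¹ := by field_simp
  · refine abs_le_div_of_eventually_extEnergy_le hR hu hsup ha hb hfin hε ?_ h
    filter_upwards [continuous_abs.continuousAt.eventually_const_lt htT] with s hs
    exact hT hs.le

end NonRadiativeDecay

/-! ### The nonlinear equation -/

section NonlinearEquation

variable {p : ℕ} {n : ℕ∞} {R : ℝ} {u : ℝ → ℝ → ℝ} {t r : ℝ}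

lemma hasDerivAt_abs_pow_mul_self {k : ℕ} (hk : 2 ≤ k) (x : ℝ) :
    HasDerivAt (fun x => |x| ^ k * x) ((k + 1) * |x| ^ k) x := by
  have habs := hasDerivAt_abs_rpow x (p := k) (by exact_mod_cast hk)
  have hsub : (k : ℝ) - 2 = ((k - 2 : ℕ) : ℝ) := by push_cast [hk]; ring
  simp only [hsub, Real.rpow_natCast] at habs
  refine (habs.mul (hasDerivAt_id' x)).congr_deriv ?_
  calc k * |x| ^ (k - 2) * x * x + |x| ^ k * 1
      = k * (|x| ^ (k - 2) * |x| ^ 2) + |x| ^ k := by rw [sq_abs]; ring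
    _ = (k + 1) * |x| ^ k := by rw [pow_sub_mul_pow _ hk]; ring

namespace IsExtSol

lemma contDiffOn (hsol : IsExtSol p n R u) {m : ℕ∞} (hm : m ≤ n) :
    ContDiffOn ℝ m (uncurry u) (extRegion R) :=
  ContDiffOn.of_le hsol.1 (by exact_mod_cast hm)

lemma contDiffOn_dtu (hsol : IsExtSol p n R u) {m : ℕ∞} (hm : m + 1 ≤ n) :
    ContDiffOn ℝ m (uncurry (dtu u)) (extRegion R) := fun _ hq =>
  (contDiffAt_dtu ((hsol.contDiffOn hm).contDiffAt (extRegion_mem_nhds hq))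
    (by push_cast; rfl)).contDiffWithinAt

lemma dalembertian_sub_eq (hsol : IsExtSol p n R u) (h : R + |t| < r) :
    dalembertian u t r - 2 * (3 / 2) / r * dru u t r = |u t r| ^ (p - 1) * u t r := by
  rw [mul_div_cancel₀ _ two_ne_zero]
  exact hsol.2 t r h

lemma dalembertian_dtu_sub_eq (hsol : IsExtSol p n R u) (hn : 3 ≤ n) (hp : 3 ≤ p)
    (h : R + |t| < r) :
    dalembertian (dtu u) t r - 2 * (3 / 2) / r * dru (dtu u) t r =
      p * |u t r| ^ (p - 1) * dtu u t r := by
  have hu : ContDiffAt ℝ 3 (uncurry u) (t, r) :=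
    (hsol.contDiffOn hn).contDiffAt (extRegion_mem_nhds h)
  have hu₂ : ContDiffAt ℝ 2 (uncurry u) (t, r) := hu.of_le (by norm_num)
  have hlhs : HasDerivAt (fun s => dalembertian u s r - 2 * (3 / 2) / r * dru u s r)
      (dtu (dtu (dtu u)) t r - dtu (dru (dru u)) t r - 2 * (3 / 2) / r * dtu (dru u) t r) t :=
    ((hasDerivAt_time (differentiableAt_dtu (contDiffAt_dtu hu (by norm_num)))).sub
      (hasDerivAt_time (differentiableAt_dru (contDiffAt_dru hu (by norm_num))))).sub
      ((hasDerivAt_time (differentiableAt_dru hu₂)).const_mul _)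
  have hrhs := (hasDerivAt_abs_pow_mul_self (show 2 ≤ p - 1 by lia) (u t r)).comp t
    (hasDerivAt_time (hu.differentiableAt (by norm_num)))
  have hequation : (fun s => dalembertian u s r - 2 * (3 / 2) / r * dru u s r) =ᶠ[𝓝 t]
      fun s => |u s r| ^ (p - 1) * u s r := by
    filter_upwards [(Continuous.prodMk_left r).continuousAt.preimage_mem_nhds
      (extRegion_mem_nhds h)] with s hs using hsol.dalembertian_sub_eq hs
  have hderiv := hlhs.unique (hrhs.congr_of_eventuallyEq hequation)
  rw [dtu_dru_dru_comm hu, dtu_dru_comm hu₂] at hderiv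
  rw [dalembertian, hderiv, ← Nat.cast_add_one, Nat.sub_add_cancel (by lia)]

end IsExtSol

lemma abs_le_div_of_supH_lt_top {a b : ℝ} (hR : 0 ≤ R)
    (hu : ContDiffOn ℝ 2 (uncurry u) (extRegion R)) (hsup : supH R u < ⊤)
    (ha : 0 < a) (hb : 0 < b) (hfin : eLL a b R u < ⊤) (h : R + |t| < r) :
    |u t r| ≤ ((supH R u).toReal + 1) / r :=
  abs_le_div_of_eventually_extEnergy_le hR hu hsup ha hb hfin (by positivity)
    (Eventually.of_forall fun s => (extEnergy_le_toReal_supH_sq hR hu hsup s).trans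
      (by gcongr; linarith)) h

lemma abs_pow_le_div_pow {x C : ℝ} {k l : ℕ} (hR : 0 < R) (hRr : R ≤ r) (hx : |x| ≤ C / r)
    (hl : l ≤ k) : |x| ^ k ≤ C ^ k / R ^ (k - l) / r ^ l := by
  have hr : 0 < r := hR.trans_le hRr
  have hC : 0 ≤ C := (mul_nonneg (abs_nonneg x) hr.le).trans ((le_div_iff₀ hr).1 hx)
  calc |x| ^ k ≤ (C / r) ^ k := by gcongr
    _ = C ^ k / r ^ (k - l) / r ^ l := by
        rw [div_pow, div_div, pow_sub_mul_pow _ hl]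
    _ ≤ C ^ k / R ^ (k - l) / r ^ l := by gcongr

lemma isExtLittleO_dtu_of_wave_eq {P : ℝ → ℝ → ℝ} {a b c : ℝ} (hR : 0 ≤ R)
    (hu : ContDiffOn ℝ 2 (uncurry u) (extRegion R)) (hu₀ : ∀ r, R < r → u 0 r = 0)
    (ha : 0 < a) (hb : 0 < b) (hfin : eLL a b R u < ⊤) (hsup : supH R u < ⊤)
    (hvan : ExtEnergyVanishes R u)
    (hwave : ∀ t r, R + |t| < r →
      dalembertian u t r - 2 * (3 / 2) / r * dru u t r = P t r * u t r)
    (hc : 0 ≤ c) (hP : ∀ t r, R + |t| < r → |P t r| ≤ c / r ^ 2) :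
    IsExtLittleO R (dtu u) fun r => r ^ (1 - 2 * (3 / 2) : ℝ) := by
  have hbound := fun t r => abs_le_div_of_supH_lt_top (t := t) (r := r) hR hu hsup ha hb hfin
  have hsmall : IsExtLittleO R u fun r => r⁻¹ :=
    isExtLittleO_inv_of_abs_dtu_le hR hu hsup hvan ha hb hfin hu₀ fun t r h =>
      abs_dtu_le_of_wave_eq hR hu hsup hvan hbound hwave hc hP (by positivity)
        (fun s x hsx _ => hbound s x hsx) h le_rfl
  intro ε hε
  obtain ⟨ρ, hρ⟩ := hsmall (ε / (2 * (c + 3 / 4))) (by positivity)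
  refine ⟨ρ, fun t r h hr => ?_⟩
  have hr₀ := pos_of_add_abs_lt hR h
  have hpow : r ^ (1 - 2 * (3 / 2) : ℝ) = (r ^ 2)⁻¹ := by
    rw [← Real.rpow_natCast, ← Real.rpow_neg hr₀.le]
    norm_num
  calc |dtu u t r| ≤ 2 * (ε / (2 * (c + 3 / 4))) * (c + 3 / 4) / r ^ 2 :=
        abs_dtu_le_of_wave_eq hR hu hsup hvan hbound hwave hc hP (by positivity) hρ h hr
    _ = ε * r ^ (1 - 2 * (3 / 2) : ℝ) := by
        rw [hpow]
        field_simp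

end NonlinearEquation

theorem stmt12_general {p : ℕ} (hp : 5 ≤ p) {n : ℕ∞} (hn : 3 ≤ n) {R : ℝ} (hR : 0 < R)
    {u : ℝ → ℝ → ℝ} (hsol : IsExtSol p n R u) (hu₀ : ∀ r, R < r → u 0 r = 0)
    {a b : ℝ} (ha : 0 < a) (hb : 0 < b) (hfin : eLL a b R u < ⊤) (hsup : supH R u < ⊤)
    (hvan : ExtEnergyVanishes R u) {t r : ℝ} (h : R + |t| < r) : u t r = 0 := by
  have hu : ContDiffOn ℝ 2 (uncurry u) (extRegion R) := hsol.contDiffOn (le_trans (by norm_num) hn)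
  set C := (supH R u).toReal + 1
  have hpotential : ∀ {k : ℕ}, k ≤ p - 1 → ∀ t r, R + |t| < r →
      |(|u t r| ^ (p - 1))| ≤ C ^ (p - 1) / R ^ (p - 1 - k) / r ^ k := fun hk t r h => by
    rw [abs_pow, abs_abs]
    exact abs_pow_le_div_pow hR (lt_of_add_abs_lt h).le
      (abs_le_div_of_supH_lt_top hR.le hu hsup ha hb hfin h) hk
  have hdtu_small : IsExtLittleO R (dtu u) fun r => r ^ (1 - 2 * (3 / 2) : ℝ) :=
    isExtLittleO_dtu_of_wave_eq hR.le hu hu₀ ha hb hfin hsup hvan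
      (fun _ _ => hsol.dalembertian_sub_eq) (by positivity) (hpotential (by lia))
  have hdtu_zero : ∀ s, R + |s| < r → dtu u s r = 0 := fun s =>
    eq_zero_of_isExtLittleO_of_wave_eq (k := √(p * (C ^ (p - 1) / R ^ (p - 1 - 4)))) hR.le
      (by norm_num) (by positivity) (hsol.contDiffOn_dtu hn)
      (fun _ _ => hsol.dalembertian_dtu_sub_eq hn (by lia))
      (fun t r h => by
        rw [abs_mul, Nat.abs_cast, Real.sq_sqrt (by positivity), mul_div_assoc]
        gcongr
        exact hpotential (by lia) t r h)
      hdtu_small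
  simpa using abs_le_mul_abs_of_abs_dtu_le (hu.of_le one_le_two) (hu₀ r (lt_of_add_abs_lt h))
    (fun s hs => (abs_eq_zero.2 (hdtu_zero s hs)).le) h

/-- rigidity for odd non-radiative exterior solutions: a smooth
non-radiative exterior solution with data `(0, u₁)`, `u₁ ∈ L²(R)`, vanishes
identically on `{r > R + |t|}`. -/
theorem stmt12 (p : ℕ) (hodd : Odd p) (hp5 : 5 ≤ p) (R : ℝ) (hR : 0 < R)
    (u : ℝ → ℝ → ℝ) (u₁ : ℝ → ℝ)
    (hsol : IsExtSol p ⊤ R u)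
    (hdata0 : ∀ r : ℝ, R < r → u 0 r = 0)
    (hdata1 : ∀ r : ℝ, R < r → dtu u 0 r = u₁ r)
    (hu₁ : (∫⁻ r in Ioi R, ENNReal.ofReal ((u₁ r) ^ 2 * r ^ 3)) < ⊤)
    (hfin1 : eLL 2 8 R u < ⊤) (hfin2 : eLL 3 6 R u < ⊤)
    (hfin3 : eLL 3 6 R (dtu u) < ⊤)
    (hfin4 : supH R u < ⊤)
    (hvan : ExtEnergyVanishes R u) :
    ∀ t r : ℝ, R + |t| < r → u t r = 0 := fun _ _ =>
  stmt12_general hp5 le_top hR hsol hdata0 two_pos (by norm_num) hfin1 hfin4 hvan
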